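/- arXiv:1607.06294 — 3 statements merged into one kernel-verified Lean document; each statement's English description precedes it below -/
import Mathlib

section
/- For every network (X, A_X), the reciprocal clustering output u^R_X, defined by u^R_X(x,x') = min over chains C(x,x') from x to x' of max_i max(A_X(x_i,x_{i+1}), A_X(x_{i+1},x_i)), is a valid ultrametric on X: it is nonnegative, u^R_X(x,x') = 0 iff x = x', it is symmetric, and it satisfies the strong triangle inequality u^R_X(x,x'') ≤ max(u^R_X(x,x'), u^R_X(x',x'')) for all x,x',x''. -/
noncomputable section

/-- A dissimilarity function on a node set: nonnegative and zero exactly on the diagonal.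
It need not be symmetric nor satisfy the triangle inequality. -/
def IsDissim {X : Type} (A : X → X → ℝ) : Prop :=
  (∀ x x', 0 ≤ A x x') ∧ (∀ x x', A x x' = 0 ↔ x = x')

/-- A symmetric dissimilarity. -/
def IsSym {X : Type} (A : X → X → ℝ) : Prop := ∀ x x', A x x' = A x' x

/-- An ultrametric: nonnegative, zero exactly on the diagonal, symmetric, and
satisfying the strong triangle inequality. -/
def IsUltrametric {X : Type} (u : X → X → ℝ) : Prop :=
  (∀ x x', 0 ≤ u x x') ∧ (∀ x x', u x x' = 0 ↔ x = x') ∧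
    (∀ x x', u x x' = u x' x) ∧
    (∀ x x' x'', u x x'' ≤ max (u x x') (u x' x''))

/-- The cost of the chain `x :: l`: the maximum dissimilarity over consecutive links. -/
def chainCost {X : Type} (A : X → X → ℝ) : X → List X → ℝ
  | _, [] => 0
  | x, y :: l => max (A x y) (chainCost A y l)

/-- The set of costs of chains from `x` to `x'`. -/
def chainCosts {X : Type} (A : X → X → ℝ) (x x' : X) : Set ℝ :=
  {c | ∃ l : List X, (x :: l).getLast (List.cons_ne_nil x l) = x' ∧ chainCost A x l = c}

/-- The directed minimum chain cost `ũ*_X(x,x')`: minimum cost over all chains from `x` to `x'`. -/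
def minChainCost {X : Type} (A : X → X → ℝ) (x x' : X) : ℝ :=
  sInf (chainCosts A x x')

/-- The nonreciprocal ultrametric `u^NR`. -/
def nonrecipUltra {X : Type} (A : X → X → ℝ) (x x' : X) : ℝ :=
  max (minChainCost A x x') (minChainCost A x' x)

/-- The reciprocal ultrametric `u^R`. -/
def recipUltra {X : Type} (A : X → X → ℝ) (x x' : X) : ℝ :=
  minChainCost (fun a b => max (A a b) (A b a)) x x'

/-- The unilateral ultrametric `u^U`. -/
def uniUltra {X : Type} (A : X → X → ℝ) (x x' : X) : ℝ :=
  minChainCost (fun a b => min (A a b) (A b a)) x x'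

/-- The minimum loop cost `mlc(X, A_X)`: minimum cost over loops, i.e. chains from some
node `x` back to itself containing at least one node different from `x`. -/
def mlc {X : Type} (A : X → X → ℝ) : ℝ :=
  sInf {c | ∃ (x : X) (l : List X),
    (x :: l).getLast (List.cons_ne_nil x l) = x ∧ (∃ y ∈ l, y ≠ x) ∧ chainCost A x l = c}

/-- The separation `sep(X, A_X)`: minimum dissimilarity over pairs of distinct nodes. -/
def sep {X : Type} (A : X → X → ℝ) : ℝ :=
  sInf {c | ∃ x x' : X, x ≠ x' ∧ A x x' = c}

/-- A hierarchical clustering method: assigns to every (finite) network an output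
two-variable function on the same node set. -/
abbrev HCMethod := ∀ (X : Type) [Fintype X], (X → X → ℝ) → X → X → ℝ

/-- A hierarchical clustering method outputs an ultrametric on every network. -/
def IsHCMethod (H : HCMethod) : Prop :=
  ∀ (X : Type) [Fintype X] (A : X → X → ℝ), IsDissim A → IsUltrametric (H X A)

/-- `p, q` are the two (distinct) nodes of a two-node set. -/
def TwoNode {X : Type} (p q : X) : Prop := p ≠ q ∧ ∀ x : X, x = p ∨ x = q

/-- Axiom of Value (A1): on every two-node network the output clusters the two nodes at
the maximum of the two dissimilarities. -/
def AxiomValue (H : HCMethod) : Prop :=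
  ∀ (X : Type) [Fintype X] (p q : X), TwoNode p q →
    ∀ A : X → X → ℝ, IsDissim A → H X A p q = max (A p q) (A q p)

/-- Axiom of Transformation (A2): dissimilarity-reducing maps do not increase output values. -/
def AxiomTransform (H : HCMethod) : Prop :=
  ∀ (X Y : Type) [Fintype X] [Fintype Y] (AX : X → X → ℝ) (AY : Y → Y → ℝ),
    IsDissim AX → IsDissim AY →
    ∀ φ : X → Y, (∀ x x', AY (φ x) (φ x') ≤ AX x x') →
    ∀ x x' : X, H Y AY (φ x) (φ x') ≤ H X AX x x'

/-- The canonical dissimilarity `A_{n,α,β}` on `Fin n`: `α` for `i > j`, `β` for `i < j`,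
`0` on the diagonal. -/
def canonDissim (n : ℕ) (α β : ℝ) : Fin n → Fin n → ℝ :=
  fun i j => if i = j then 0 else if j < i then α else β

/-- Extended Axiom of Value (A1'): on every permuted canonical network `Δ_n(α,β,Π)` the
output ultrametric equals `max(α,β)` off the diagonal. -/
def ExtAxiomValue (H : HCMethod) : Prop :=
  ∀ (n : ℕ) (α β : ℝ), 0 < α → 0 < β → ∀ π : Equiv.Perm (Fin n),
    ∀ i j : Fin n, i ≠ j →
      H (Fin n) (fun i j => canonDissim n α β (π i) (π j)) i j = max α β

/-- Alternative Axiom of Value (A1''): on every two-node network the output clusters the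
two nodes at the minimum of the two dissimilarities. -/
def AltAxiomValue (H : HCMethod) : Prop :=
  ∀ (X : Type) [Fintype X] (p q : X), TwoNode p q →
    ∀ A : X → X → ℝ, IsDissim A → H X A p q = min (A p q) (A q p)

/-- Agnostic Axiom of Value (A1'''): on every two-node network the output value lies
between the minimum and maximum of the two dissimilarities. -/
def AgnAxiomValue (H : HCMethod) : Prop :=
  ∀ (X : Type) [Fintype X] (p q : X), TwoNode p q →
    ∀ A : X → X → ℝ, IsDissim A →
      min (A p q) (A q p) ≤ H X A p q ∧ H X A p q ≤ max (A p q) (A q p)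

theorem chainCost_nonneg_aux {X : Type} (B : X → X → ℝ) (x : X) (l : List X) :
    0 ≤ chainCost B x l := by
  induction l generalizing x with
  | nil => simp [chainCost]
  | cons y l ih => exact le_max_of_le_right (ih y)

theorem chainCosts_append_aux {X : Type} (B : X → X → ℝ) (x y z : X) (c d : ℝ)
    (hc : c ∈ chainCosts B x y) (hd : d ∈ chainCosts B y z) :
    max c d ∈ chainCosts B x z := by
  obtain ⟨l, hl, rfl⟩ := hc
  induction l generalizing x with
  | nil =>
    simp only [List.getLast_singleton] at hl
    subst hl
    obtain ⟨m, hm, rfl⟩ := hd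
    exact ⟨m, hm, by rw [chainCost, max_eq_right (chainCost_nonneg_aux B x m)]⟩
  | cons w l ih =>
    obtain ⟨m, hm, he⟩ := ih w (by simpa using hl)
    refine ⟨w :: m, by simpa using hm, ?_⟩
    rw [chainCost, he, chainCost, max_assoc]

theorem chainCosts_single_aux {X : Type} (B : X → X → ℝ) (hB : ∀ x y, 0 ≤ B x y) (x y : X) :
    B x y ∈ chainCosts B x y :=
  ⟨[y], by simp, by simp [chainCost, hB]⟩

theorem chainCosts_symm_aux {X : Type} (B : X → X → ℝ) (hB : ∀ x y, 0 ≤ B x y)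
    (hs : ∀ x y, B x y = B y x) (x y : X) (c : ℝ)
    (hc : c ∈ chainCosts B x y) : c ∈ chainCosts B y x := by
  obtain ⟨l, hl, rfl⟩ := hc
  induction l generalizing x with
  | nil =>
    simp only [List.getLast_singleton] at hl
    subst hl
    exact ⟨[], by simp, rfl⟩
  | cons w l ih =>
    have h1 := ih w (by simpa using hl)
    have h2 := chainCosts_append_aux B y w x _ _ h1 (chainCosts_single_aux B hB w x)
    rw [max_comm, hs w x] at h2
    exact h2

theorem chainCosts_lower_aux {X : Type} (B : X → X → ℝ) (e : ℝ)
    (he : ∀ x y, x ≠ y → e ≤ B x y) (x y : X) (hxy : x ≠ y) (c : ℝ)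
    (hc : c ∈ chainCosts B x y) : e ≤ c := by
  obtain ⟨l, hl, rfl⟩ := hc
  induction l generalizing x with
  | nil =>
    simp only [List.getLast_singleton] at hl
    exact absurd hl hxy
  | cons w l ih =>
    by_cases hxw : x = w
    · subst hxw
      exact le_max_of_le_right (ih x hxy (by simpa using hl))
    · exact le_max_of_le_left (he x w hxw)

theorem exists_sep_aux {X : Type} [Fintype X] (B : X → X → ℝ)
    (hB : ∀ x y, x ≠ y → 0 < B x y) : ∃ e : ℝ, 0 < e ∧ ∀ x y, x ≠ y → e ≤ B x y := by
  classical
  by_cases hne : Nonempty {p : X × X // p.1 ≠ p.2}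
  · obtain ⟨p, hp⟩ := Finite.exists_min (fun p : {p : X × X // p.1 ≠ p.2} => B p.1.1 p.1.2)
    exact ⟨_, hB _ _ p.2, fun x y hxy => hp ⟨(x, y), hxy⟩⟩
  · exact ⟨1, one_pos, fun x y hxy => (hne ⟨⟨(x, y), hxy⟩⟩).elim⟩

/-- The reciprocal clustering output is a valid ultrametric. -/
theorem recipUltra_isUltrametric
    (X : Type) [Fintype X] (A : X → X → ℝ) (hA : IsDissim A) :
    IsUltrametric (recipUltra A) := by
  obtain ⟨h0, h1⟩ := hA
  unfold recipUltra
  set B : X → X → ℝ := fun a b => max (A a b) (A b a) with hBdef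
  have hB : ∀ x y, 0 ≤ B x y := fun x y => le_max_of_le_left (h0 x y)
  have hs : ∀ x y, B x y = B y x := fun x y => max_comm _ _
  have hpos : ∀ x y, x ≠ y → 0 < B x y := fun x y hxy =>
    lt_max_of_lt_left (lt_of_le_of_ne (h0 x y) (fun h => hxy ((h1 x y).1 h.symm)))
  have hne : ∀ x y, (chainCosts B x y).Nonempty := fun x y =>
    ⟨_, chainCosts_single_aux B hB x y⟩
  have hnn : ∀ x y, ∀ c ∈ chainCosts B x y, 0 ≤ c := by
    rintro x y c ⟨l, -, rfl⟩
    exact chainCost_nonneg_aux B x l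
  have hbdd : ∀ x y, BddBelow (chainCosts B x y) := fun x y => ⟨0, fun c hc => hnn x y c hc⟩
  have hu : ∀ x y, 0 ≤ minChainCost B x y := fun x y => le_csInf (hne x y) (hnn x y)
  refine ⟨hu, fun x y => ⟨fun h => ?_, fun h => ?_⟩, fun x y => ?_, fun x y z => ?_⟩
  · by_contra hxy
    obtain ⟨e, he, hle⟩ := exists_sep_aux B hpos
    have : e ≤ minChainCost B x y :=
      le_csInf (hne x y) (fun c hc => chainCosts_lower_aux B e hle x y hxy c hc)
    linarith
  · subst h
    exact le_antisymm (csInf_le (hbdd x x) ⟨[], by simp, rfl⟩) (hu x x)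
  · have : chainCosts B x y = chainCosts B y x := Set.ext fun c =>
      ⟨chainCosts_symm_aux B hB hs x y c, chainCosts_symm_aux B hB hs y x c⟩
    simp only [minChainCost, this]
  · by_contra! hlt
    obtain ⟨hl1, hl2⟩ := max_lt_iff.1 hlt
    obtain ⟨c, hc, hc'⟩ := exists_lt_of_csInf_lt (hne x y) hl1
    obtain ⟨d, hd, hd'⟩ := exists_lt_of_csInf_lt (hne y z) hl2
    exact absurd (csInf_le (hbdd x z) (chainCosts_append_aux B x y z c d hc hd))
      (not_le.2 (max_lt hc' hd'))
end
end

section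
/- The nonreciprocal clustering method H^NR satisfies the Axiom of Value (A1) and the Axiom of Transformation (A2). That is: (i) for the two-node network Δ₂(α,β) = ({p,q}, A) with A(p,q) = α, A(q,p) = β, α,β > 0, the nonreciprocal ultrametric satisfies u^NR(p,q) = max(α,β); and (ii) for any two networks (X, A_X) and (Y, A_Y) and any map φ : X → Y with A_X(x,x') ≥ A_Y(φ(x),φ(x')) for all x,x' ∈ X, the nonreciprocal ultrametrics satisfy u^NR_X(x,x') ≥ u^NR_Y(φ(x),φ(x')) for all x,x' ∈ X. -/
noncomputable section

theorem aux_cost_nonneg {X : Type} (A : X → X → ℝ) (l : List X) :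
    ∀ x, 0 ≤ chainCost A x l := by
  induction l with
  | nil => intro x; exact le_refl _
  | cons y l ih => intro x; exact le_max_of_le_right (ih y)

theorem aux_bdd {X : Type} (A : X → X → ℝ) (x x' : X) : BddBelow (chainCosts A x x') := by
  refine ⟨0, ?_⟩
  rintro c ⟨l, _, rfl⟩
  exact aux_cost_nonneg A l x

theorem aux_nonempty {X : Type} (A : X → X → ℝ) (x x' : X) : (chainCosts A x x').Nonempty :=
  ⟨_, [x'], by simp, rfl⟩

theorem aux_two {X : Type} (A : X → X → ℝ) (p q : X) (hpq : p ≠ q)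
    (h : ∀ x : X, x = p ∨ x = q) (l : List X) :
    (p :: l).getLast (List.cons_ne_nil p l) = q → A p q ≤ chainCost A p l := by
  induction l with
  | nil => intro hl; exact absurd hl hpq
  | cons y l ih =>
    intro hl
    rcases h y with rfl | rfl
    · exact le_max_of_le_right (ih (by simpa using hl))
    · exact le_max_left _ _

theorem aux_min {X : Type} (A : X → X → ℝ) (hA : IsDissim A) (p q : X) (hpq : p ≠ q)
    (h : ∀ x : X, x = p ∨ x = q) : minChainCost A p q = A p q := by
  apply le_antisymm
  · refine csInf_le (aux_bdd A p q) ⟨[q], by simp, ?_⟩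
    simp only [chainCost]
    exact max_eq_left (hA.1 p q)
  · refine le_csInf (aux_nonempty A p q) ?_
    rintro c ⟨l, hl, rfl⟩
    exact aux_two A p q hpq h l hl

theorem aux_map_cost {X Y : Type} (AX : X → X → ℝ) (AY : Y → Y → ℝ) (φ : X → Y)
    (h : ∀ x x', AY (φ x) (φ x') ≤ AX x x') (l : List X) :
    ∀ x, chainCost AY (φ x) (l.map φ) ≤ chainCost AX x l := by
  induction l with
  | nil => intro x; exact le_refl _
  | cons y l ih => intro x; exact max_le_max (h x y) (ih y)

theorem aux_map {X Y : Type} (AX : X → X → ℝ) (AY : Y → Y → ℝ) (φ : X → Y)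
    (h : ∀ x x', AY (φ x) (φ x') ≤ AX x x') (x x' : X) :
    minChainCost AY (φ x) (φ x') ≤ minChainCost AX x x' := by
  refine le_csInf (aux_nonempty AX x x') ?_
  rintro c ⟨l, hl, rfl⟩
  refine le_trans (csInf_le (aux_bdd AY _ _) ⟨l.map φ, ?_, rfl⟩) (aux_map_cost AX AY φ h l x)
  subst hl
  exact List.getLast_map (f := φ) (l := x :: l) (by simp)

/-- Nonreciprocal clustering satisfies the Axiom of Value (A1) and the Axiom of
Transformation (A2). -/
theorem nonrecip_admissible :
    (∀ (X : Type) [Fintype X] (p q : X), TwoNode p q →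
        ∀ A : X → X → ℝ, IsDissim A → nonrecipUltra A p q = max (A p q) (A q p)) ∧
    (∀ (X Y : Type) [Fintype X] [Fintype Y]
        (AX : X → X → ℝ) (AY : Y → Y → ℝ), IsDissim AX → IsDissim AY →
        ∀ φ : X → Y, (∀ x x', AY (φ x) (φ x') ≤ AX x x') →
        ∀ x x' : X, nonrecipUltra AY (φ x) (φ x') ≤ nonrecipUltra AX x x') := by
  refine ⟨?_, ?_⟩
  · rintro X _ p q ⟨hpq, h⟩ A hA
    unfold nonrecipUltra
    rw [aux_min A hA p q hpq h, aux_min A hA q p hpq.symm (fun x => (h x).symm)]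
  · intro X Y _ _ AX AY _ _ φ h x x'
    exact max_le_max (aux_map AX AY φ h x x') (aux_map AX AY φ h x' x)
end
end

section
/- For every network (X, A_X), the unilateral clustering output u^U_X, defined by u^U_X(x,x') = min over chains C(x,x') from x to x' of max_i min(A_X(x_i,x_{i+1}), A_X(x_{i+1},x_i)), is a valid ultrametric on X: it is nonnegative, u^U_X(x,x') = 0 iff x = x', it is symmetric, and it satisfies the strong triangle inequality u^U_X(x,x'') ≤ max(u^U_X(x,x'), u^U_X(x',x'')) for all x,x',x''. -/
noncomputable section

lemma chainCost_nonneg' {X : Type} (B : X → X → ℝ) : ∀ (l : List X) (x : X),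
    (∀ a b, 0 ≤ B a b) → 0 ≤ chainCost B x l
  | [], x, _ => le_rfl
  | y :: l, x, h => le_max_of_le_left (h x y)

lemma chain_append {X : Type} (B : X → X → ℝ) (hB : ∀ a b, 0 ≤ B a b) (l₂ : List X) (y z : X)
    (h2 : (y :: l₂).getLast (List.cons_ne_nil y l₂) = z) : ∀ (l₁ : List X) (x : X),
    (x :: l₁).getLast (List.cons_ne_nil x l₁) = y →
    (x :: (l₁ ++ l₂)).getLast (List.cons_ne_nil _ _) = z ∧
    chainCost B x (l₁ ++ l₂) ≤ max (chainCost B x l₁) (chainCost B y l₂) := by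
  intro l₁
  induction l₁ with
  | nil =>
    intro x hx
    have hxy : x = y := by simpa using hx
    subst hxy
    exact ⟨h2, le_max_right _ _⟩
  | cons w l ih =>
    intro x hx
    rw [List.getLast_cons (List.cons_ne_nil w l)] at hx
    obtain ⟨h3, h4⟩ := ih w hx
    refine ⟨?_, ?_⟩
    · rw [← h3]
      exact List.getLast_cons (List.cons_ne_nil _ _)
    · simp only [List.cons_append, chainCost]
      rw [max_assoc]
      exact max_le_max le_rfl h4

lemma chain_reverse {X : Type} (B : X → X → ℝ) (hB : ∀ a b, 0 ≤ B a b)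
    (hs : ∀ a b, B a b = B b a) (y : X) : ∀ (l : List X) (x : X),
    (x :: l).getLast (List.cons_ne_nil x l) = y →
    ∃ l' : List X, (y :: l').getLast (List.cons_ne_nil y l') = x ∧
      chainCost B y l' ≤ chainCost B x l := by
  intro l
  induction l with
  | nil =>
    intro x hx
    exact ⟨[], by simpa using hx.symm, le_rfl⟩
  | cons w l ih =>
    intro x hx
    rw [List.getLast_cons (List.cons_ne_nil w l)] at hx
    obtain ⟨l', h1, h2⟩ := ih w hx
    obtain ⟨h3, h4⟩ := chain_append B hB [x] w x (by simp) l' y h1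
    refine ⟨l' ++ [x], h3, h4.trans ?_⟩
    have h0 := chainCost_nonneg' B l w hB
    simp only [chainCost]
    refine max_le (h2.trans (le_max_right _ _)) (max_le ?_ ?_)
    · rw [hs w x]; exact le_max_left _ _
    · exact h0.trans (le_max_right _ _)

lemma chain_lower {X : Type} (B : X → X → ℝ) (d : ℝ) (hd : ∀ a b, a ≠ b → d ≤ B a b) (y : X) :
    ∀ (l : List X) (x : X), (x :: l).getLast (List.cons_ne_nil x l) = y → x ≠ y →
    d ≤ chainCost B x l := by
  intro l
  induction l with
  | nil =>
    intro x hx hne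
    exact absurd (by simpa using hx) hne
  | cons w l ih =>
    intro x hx hne
    rw [List.getLast_cons (List.cons_ne_nil w l)] at hx
    by_cases h : w = y
    · subst h
      exact (hd _ _ hne).trans (le_max_left _ _)
    · exact (ih w hx h).trans (le_max_right _ _)

lemma chainCosts_nonempty' {X : Type} (B : X → X → ℝ) (x y : X) : (chainCosts B x y).Nonempty :=
  ⟨_, [y], by simp, rfl⟩

lemma chainCosts_bdd {X : Type} (B : X → X → ℝ) (hB : ∀ a b, 0 ≤ B a b) (x y : X) :
    BddBelow (chainCosts B x y) := by
  refine ⟨0, ?_⟩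
  rintro c ⟨l, -, rfl⟩
  exact chainCost_nonneg' B l x hB

lemma minChainCost_nonneg' {X : Type} (B : X → X → ℝ) (hB : ∀ a b, 0 ≤ B a b) (x y : X) :
    0 ≤ minChainCost B x y := by
  refine le_csInf (chainCosts_nonempty' B x y) ?_
  rintro c ⟨l, -, rfl⟩
  exact chainCost_nonneg' B l x hB

lemma minChainCost_symm_le {X : Type} (B : X → X → ℝ) (hB : ∀ a b, 0 ≤ B a b)
    (hs : ∀ a b, B a b = B b a) (x y : X) : minChainCost B x y ≤ minChainCost B y x := by
  refine le_csInf (chainCosts_nonempty' B y x) ?_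
  rintro c ⟨l, hl, rfl⟩
  obtain ⟨l', h1, h2⟩ := chain_reverse B hB hs x l y hl
  exact (csInf_le (chainCosts_bdd B hB x y) ⟨l', h1, rfl⟩).trans h2

lemma exists_sep {X : Type} [Fintype X] (B : X → X → ℝ) (h : ∀ a b, a ≠ b → 0 < B a b) :
    ∃ d : ℝ, 0 < d ∧ ∀ a b, a ≠ b → d ≤ B a b := by
  by_cases hne : Nonempty {p : X × X // p.1 ≠ p.2}
  · obtain ⟨p, hp⟩ := Finite.exists_min (fun p : {p : X × X // p.1 ≠ p.2} => B p.1.1 p.1.2)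
    exact ⟨_, h _ _ p.2, fun a b hab => hp ⟨(a, b), hab⟩⟩
  · exact ⟨1, one_pos, fun a b hab => absurd ⟨⟨(a, b), hab⟩⟩ hne⟩

lemma minChainCost_isUltrametric {X : Type} [Fintype X] (B : X → X → ℝ)
    (hB : ∀ a b, 0 ≤ B a b) (hpos : ∀ a b, a ≠ b → 0 < B a b)
    (hs : ∀ a b, B a b = B b a) : IsUltrametric (minChainCost B) := by
  refine ⟨minChainCost_nonneg' B hB, ?_, ?_, ?_⟩
  · intro x y
    constructor
    · intro h0
      by_contra hne
      obtain ⟨d, hd, hdB⟩ := exists_sep B hpos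
      have : d ≤ minChainCost B x y := by
        refine le_csInf (chainCosts_nonempty' B x y) ?_
        rintro c ⟨l, hl, rfl⟩
        exact chain_lower B d hdB y l x hl hne
      linarith
    · rintro rfl
      exact le_antisymm (csInf_le (chainCosts_bdd B hB x x) ⟨[], by simp, rfl⟩)
        (minChainCost_nonneg' B hB x x)
  · exact fun x y => le_antisymm (minChainCost_symm_le B hB hs x y)
      (minChainCost_symm_le B hB hs y x)
  · intro x y z
    refine le_of_forall_gt fun r hr => ?_
    obtain ⟨h1, h2⟩ := max_lt_iff.1 hr
    obtain ⟨c1, ⟨l1, hl1, rfl⟩, hc1⟩ := exists_lt_of_csInf_lt (chainCosts_nonempty' B x y) h1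
    obtain ⟨c2, ⟨l2, hl2, rfl⟩, hc2⟩ := exists_lt_of_csInf_lt (chainCosts_nonempty' B y z) h2
    obtain ⟨h3, h4⟩ := chain_append B hB l2 y z hl2 l1 x hl1
    exact ((csInf_le (chainCosts_bdd B hB x z) ⟨_, h3, rfl⟩).trans h4).trans_lt (max_lt hc1 hc2)

/-- The unilateral clustering output is a valid ultrametric. -/
theorem uniUltra_isUltrametric
    (X : Type) [Fintype X] (A : X → X → ℝ) (hA : IsDissim A) :
    IsUltrametric (uniUltra A) := by
  have hpos : ∀ a b, a ≠ b → 0 < A a b := fun a b hab =>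
    lt_of_le_of_ne (hA.1 a b) fun h => hab ((hA.2 a b).1 h.symm)
  exact minChainCost_isUltrametric (fun a b => min (A a b) (A b a))
    (fun a b => le_min (hA.1 _ _) (hA.1 _ _))
    (fun a b hab => lt_min (hpos _ _ hab) (hpos _ _ hab.symm))
    (fun a b => min_comm _ _)
end
end
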